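/- arXiv:1710.11219 — 2 statements merged into one kernel-verified Lean document; each statement's English description precedes it below -/
import Mathlib

section
/- Fix ℓ ≥ 1. Suppose the statement WFUT²_ℓ holds, i.e., for every coloring g : 𝒫_fin(ℕ) × ℕ → {0,…,ℓ−1} there exist an IP collection 𝓘 and a color i < ℓ such that g(S, min T) = i for every S, T ∈ 𝓘 with S < T. Then for every coloring f : 2^{<ω} → {0,…,ℓ−1} of the finite binary strings there exist an infinite ordered variable word over {0,1}, encoded by b : ℕ → {0,1} and nonempty finite sets F_1 < F_2 < ⋯, and a color j < ℓ such that f(W(a)) = j for every k ≥ 0 and every a ∈ {0,1}^k. -/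
/- Binary strings are `List Bool`, with `false` playing the role of the bit `0`
and `true` the role of the bit `1`. -/

/-- `flipStr σ F` is the binary string of length `|σ|` obtained from `σ` by flipping
the bit at each position `i ∈ F` with `i < |σ|`. -/
def flipStr (σ : List Bool) (F : Finset ℕ) : List Bool :=
  σ.mapIdx fun i b => if i ∈ F then !b else b

/-- `FinLT A B` says every element of `A` is less than every element of `B`. -/
def FinLT (A B : Finset ℕ) : Prop := ∀ x ∈ A, ∀ y ∈ B, x < y

/-- The instantiation `W(a)` of the infinite ordered variable word encoded by
`b : ℕ → Bool` and `F : ℕ → Finset ℕ` (where `F k` is the set of positions of the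
`(k+1)`-st variable): the binary string of length `min (F a.length)` whose `n`-th bit
is `a i` if `n ∈ F i` for some `i < a.length`, and `b n` otherwise. -/
noncomputable def instWord (b : ℕ → Bool) (F : ℕ → Finset ℕ) (a : List Bool) : List Bool :=
  (List.range (sInf (↑(F a.length) : Set ℕ))).map fun n =>
    if h : ∃ i, i < a.length ∧ n ∈ F i then a.getD (Nat.find h) false else b n

/-- An IP collection: an infinite family of nonempty finite subsets of `ℕ`, closed under
unions of finitely many (at least one) of its members, and containing an infinite
subfamily of pairwise disjoint sets. -/
def IsIPCollection (I : Set (Finset ℕ)) : Prop :=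
  I.Infinite ∧ (∀ S ∈ I, S.Nonempty) ∧
  (∀ 𝓕 : Finset (Finset ℕ), 𝓕.Nonempty → ↑𝓕 ⊆ I → 𝓕.sup id ∈ I) ∧
  ∃ D ⊆ I, D.Infinite ∧ D.Pairwise fun S T => Disjoint S T

/-!
Colour `(S, n)` by the colour under `f` of the characteristic string of `S` cut off at length `n`,
and choose blocks `E 0 < E 1 < ⋯` in a monochromatic IP collection. Fix the constant bits to be the
characteristic function of `E 0` and let the `k`-th variable occupy `E k`. Assigning values to the
variables amounts to selecting which blocks to add to `E 0`, so every instantiation is the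
characteristic string of a member of the collection. The block `E 0` is kept out of the variables
so that this member is nonempty even when every variable is assigned `0`.
-/

/-- The initial segment of length `n` of the characteristic function of `S`, as a binary string. -/
def charString (S : Finset ℕ) (n : ℕ) : List Bool :=
  (List.range n).map fun m => decide (m ∈ S)

/-- The set of positions at which the binary string `a` has the bit `1`. -/
def trueIndices (a : List Bool) : Finset ℕ :=
  {i ∈ Finset.range a.length | a.getD i false = true}

theorem mem_trueIndices {a : List Bool} {i : ℕ} :
    i ∈ trueIndices a ↔ i < a.length ∧ a.getD i false = true := by
  rw [trueIndices, Finset.mem_filter, Finset.mem_range]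

/-- A block sequence: nonempty finite sets `E 0 < E 1 < ⋯`. The order is required for all pairs of
indices rather than only for consecutive ones. -/
structure IsBlockSequence (E : ℕ → Finset ℕ) : Prop where
  nonempty (k : ℕ) : (E k).Nonempty
  finLT ⦃i k : ℕ⦄ : i < k → FinLT (E i) (E k)

theorem FinLT.disjoint {S T : Finset ℕ} (h : FinLT S T) : Disjoint S T :=
  Finset.disjoint_left.2 fun x hS hT => (h x hS x hT).false

theorem finLT_of_disjoint_range {S T : Finset ℕ}
    (h : Disjoint (Finset.range (S.sup id + 1)) T) : FinLT S T := by
  intro x hx y hy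
  have hxS : x ≤ S.sup id := Finset.le_sup (f := id) hx
  have hyS : y ∉ Finset.range (S.sup id + 1) := Finset.disjoint_right.1 h hy
  rw [Finset.mem_range] at hyS
  omega

theorem finLT_union_biUnion {ι : Type*} {B T : Finset ℕ} {s : Finset ι} {F : ι → Finset ℕ}
    (hB : FinLT B T) (hF : ∀ i ∈ s, FinLT (F i) T) : FinLT (B ∪ s.biUnion F) T := by
  intro x hx
  rcases Finset.mem_union.1 hx with hxB | hxF
  · exact hB x hxB
  · obtain ⟨i, hi, hxi⟩ := Finset.mem_biUnion.1 hxF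
    exact hF i hi x hxi

theorem exists_disjoint_of_infinite_of_pairwise_disjoint {α : Type*} {D : Set (Finset α)}
    (hD : D.Infinite) (hdisj : D.Pairwise Disjoint) (A : Finset α) : ∃ T ∈ D, Disjoint A T := by
  by_contra! hmeet
  simp only [Finset.not_disjoint_iff] at hmeet
  have : Nonempty α := (hmeet _ hD.nonempty.some_mem).nonempty
  choose! c hcA hcT using hmeet
  obtain ⟨S, hS, T, hT, hST, hc⟩ := hD.exists_ne_map_eq_of_mapsTo hcA A.finite_toSet
  exact Finset.disjoint_left.1 (hdisj hS hT hST) (hcT S hS) (hc ▸ hcT T hT)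

theorem IsBlockSequence.pairwise_disjoint {E : ℕ → Finset ℕ} (hE : IsBlockSequence E) :
    Pairwise fun i k => Disjoint (E i) (E k) := by
  intro i k hik
  rcases hik.lt_or_gt with h | h
  · exact (hE.finLT h).disjoint
  · exact (hE.finLT h).disjoint.symm

theorem instWord_decide_mem {B : Finset ℕ} {F : ℕ → Finset ℕ}
    (hF : Pairwise fun i k => Disjoint (F i) (F k)) (hB : ∀ i, Disjoint B (F i)) (a : List Bool) :
    instWord (fun n => decide (n ∈ B)) F a =
      charString (B ∪ (trueIndices a).biUnion F) (sInf (↑(F a.length) : Set ℕ)) := by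
  refine List.map_congr_left fun n _ => ?_
  rw [Bool.eq_iff_iff, decide_eq_true_iff, Finset.mem_union, Finset.mem_biUnion]
  split_ifs with h
  · obtain ⟨hlt, hmem⟩ := Nat.find_spec h
    have hnB : n ∉ B := Finset.disjoint_right.1 (hB _) hmem
    have huniq (k : ℕ) (hk : n ∈ F k) : k = Nat.find h :=
      hF.eq (Finset.not_disjoint_iff.2 ⟨n, hk, hmem⟩)
    constructor
    · exact fun htrue => Or.inr ⟨_, mem_trueIndices.2 ⟨hlt, htrue⟩, hmem⟩
    · rintro (hn | ⟨k, htrue, hk⟩)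
      · exact absurd hn hnB
      · rw [← huniq k hk]
        exact (mem_trueIndices.1 htrue).2
  · rw [decide_eq_true_iff]
    refine (or_iff_left ?_).symm
    rintro ⟨k, htrue, hk⟩
    exact h ⟨k, (mem_trueIndices.1 htrue).1, hk⟩

namespace IsIPCollection

variable {I : Set (Finset ℕ)}

theorem union_biUnion_mem {ι : Type*} (hI : IsIPCollection I) {B : Finset ℕ} (hB : B ∈ I)
    {s : Finset ι} {F : ι → Finset ℕ} (hF : ∀ i ∈ s, F i ∈ I) : B ∪ s.biUnion F ∈ I := by
  obtain ⟨-, -, hunion, -⟩ := hI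
  have hsub : (↑(insert B (s.image F)) : Set (Finset ℕ)) ⊆ I := by
    rw [Finset.coe_insert, Finset.coe_image, Set.insert_subset_iff, Set.image_subset_iff]
    exact ⟨hB, hF⟩
  simpa [Finset.sup_image, Finset.sup_eq_biUnion] using
    hunion _ (Finset.insert_nonempty B (s.image F)) hsub

theorem exists_finLT (hI : IsIPCollection I) (S : Finset ℕ) : ∃ T ∈ I, FinLT S T := by
  obtain ⟨-, -, -, D, hDI, hDinf, hdisj⟩ := hI
  obtain ⟨T, hT, hST⟩ := exists_disjoint_of_infinite_of_pairwise_disjoint hDinf hdisj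
    (Finset.range (S.sup id + 1))
  exact ⟨T, hDI hT, finLT_of_disjoint_range hST⟩

theorem exists_isBlockSequence (hI : IsIPCollection I) :
    ∃ E : ℕ → Finset ℕ, IsBlockSequence E ∧ ∀ k, E k ∈ I := by
  have hnext (s : Finset (Finset ℕ)) (_ : ∀ S ∈ s, S ∈ I) :
      ∃ T, T ∈ I ∧ ∀ S ∈ s, FinLT S T := by
    obtain ⟨T, hT, hlt⟩ := hI.exists_finLT (s.sup id)
    exact ⟨T, hT, fun S hS x hx => hlt x (Finset.le_sup (f := id) hS hx)⟩
  obtain ⟨E, hEI, hlt⟩ := exists_seq_of_forall_finset_exists (· ∈ I) FinLT hnext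
  exact ⟨E, ⟨fun k => hI.2.1 _ (hEI k), hlt⟩, hEI⟩

theorem exists_instWord_eq_charString (hI : IsIPCollection I) :
    ∃ (b : ℕ → Bool) (F : ℕ → Finset ℕ), IsBlockSequence F ∧
      ∀ a, ∃ S ∈ I, ∃ T ∈ I, FinLT S T ∧ instWord b F a = charString S (sInf (↑T : Set ℕ)) := by
  obtain ⟨E, hE, hEI⟩ := hI.exists_isBlockSequence
  have hF : IsBlockSequence fun k => E (k + 1) :=
    ⟨fun k => hE.nonempty (k + 1), fun _ _ hik => hE.finLT (Nat.succ_lt_succ hik)⟩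
  refine ⟨fun n => decide (n ∈ E 0), fun k => E (k + 1), hF, fun a => ?_⟩
  refine ⟨_, hI.union_biUnion_mem (hEI 0) fun i _ => hEI (i + 1), _, hEI (a.length + 1), ?_,
    instWord_decide_mem hF.pairwise_disjoint (fun i => (hE.finLT i.succ_pos).disjoint) a⟩
  refine finLT_union_biUnion (hE.finLT a.length.succ_pos) fun i hi => hF.finLT ?_
  exact (mem_trueIndices.1 hi).1

end IsIPCollection

/-- `WFUT²_ℓ` implies `OVW(2,ℓ)`. -/
theorem wfut_two_implies_ovw_two (ℓ : ℕ) (hℓ : 1 ≤ ℓ)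
    (wfut : ∀ g : Finset ℕ → ℕ → ℕ, (∀ (S : Finset ℕ) (n : ℕ), S.Nonempty → g S n < ℓ) →
      ∃ (I : Set (Finset ℕ)) (i : ℕ), IsIPCollection I ∧ i < ℓ ∧
        ∀ S ∈ I, ∀ T ∈ I, FinLT S T → g S (sInf (↑T : Set ℕ)) = i) :
    ∀ f : List Bool → ℕ, (∀ σ, f σ < ℓ) →
      ∃ (b : ℕ → Bool) (F : ℕ → Finset ℕ),
        (∀ k, (F k).Nonempty) ∧ (∀ k, FinLT (F k) (F (k + 1))) ∧
        ∃ j < ℓ, ∀ a : List Bool, f (instWord b F a) = j := by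
  intro f hf
  obtain ⟨I, j, hI, hj, hmono⟩ := wfut (fun S n => f (charString S n)) fun _ _ _ => hf _
  obtain ⟨b, F, hF, hword⟩ := hI.exists_instWord_eq_charString
  refine ⟨b, F, hF.nonempty, fun k => hF.finLT k.lt_succ_self, j, hj, fun a => ?_⟩
  obtain ⟨S, hS, T, hT, hST, hinst⟩ := hword a
  rw [hinst]
  exact hmono S hS T hT hST
end

section
/- Let ℓ ≥ 1 and let c : 2^{<ω} → {0,…,ℓ−1} be a coloring of the finite binary strings. Suppose there exist an infinite binary sequence Y : ℕ → {0,1}, a sequence (P̃_i)_{i≥0} of nonempty finite subsets of ℕ with P̃_0 < P̃_1 < P̃_2 < ⋯ and Y(n) = 0 for every n ∈ ⋃_i P̃_i, and a color j < ℓ such that for every subset J ⊆ ℕ and every p ∈ {min P̃_i : i ≥ 1}, one has c((Y_{P̃_J}) ↾ p) = j, where P̃_J = ⋃_{i∈J} P̃_i. Then there exists an infinite ordered variable word over {0,1}, encoded by b : ℕ → {0,1} and nonempty finite sets F_1 < F_2 < ⋯, such that c(W(a)) = j for every k ≥ 0 and every a ∈ {0,1}^k. -/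
open Classical in
/-- `flipSeq Y F` flips the bits of the infinite binary sequence `Y` at positions in `F`. -/
noncomputable def flipSeq (Y : ℕ → Bool) (F : Set ℕ) : ℕ → Bool :=
  fun n => if n ∈ F then !Y n else Y n

/-- `seqTake Y p` is the initial segment of length `p` of the infinite binary sequence `Y`. -/
def seqTake (Y : ℕ → Bool) (p : ℕ) : List Bool := (List.range p).map Y

/-!
Take `Y` itself as the constant part and `P̃_1 < P̃_2 < ⋯` as the blocks of variables. Since `Y`
vanishes on the blocks, setting a variable to `1` flips its block and setting it to `0` changes
nothing, so `W(a)` is the initial segment of `Y_{P̃_J}` of length `min P̃_{k+1}`, where `J` is the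
set of those `i` with `a_i = 1`. The block `P̃_0` is left out because homogeneity says nothing about
the prefix of length `min P̃_0`.
-/

namespace FinLT

theorem trans {A B C : Finset ℕ} (hB : B.Nonempty) (hAB : FinLT A B) (hBC : FinLT B C) :
    FinLT A C := by
  obtain ⟨z, hz⟩ := hB
  exact fun x hx y hy => (hAB x hx z hz).trans (hBC z hz y hy)

protected theorem disjoint_s9 {A B : Finset ℕ} (h : FinLT A B) : Disjoint A B :=
  Finset.disjoint_left.2 fun x hA hB => lt_irrefl x (h x hA x hB)

variable {F : ℕ → Finset ℕ}

theorem of_forall_succ_of_lt (hne : ∀ i, (F i).Nonempty) (hF : ∀ i, FinLT (F i) (F (i + 1)))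
    {i k : ℕ} (hik : i < k) : FinLT (F i) (F k) := by
  induction k, hik using Nat.le_induction with
  | base => exact hF i
  | succ k _ ih => exact ih.trans (hne k) (hF k)

theorem pairwise_disjoint_of_forall_succ (hne : ∀ i, (F i).Nonempty)
    (hF : ∀ i, FinLT (F i) (F (i + 1))) : Pairwise (Function.onFun Disjoint F) :=
  (pairwise_disjoint_on F).2 fun _ _ hik => (of_forall_succ_of_lt hne hF hik).disjoint_s9

end FinLT

theorem mem_biUnion_coe_iff_of_mem {ι α : Type*} {F : ι → Finset α}
    (hF : Pairwise (Function.onFun Disjoint F)) {i : ι} {n : α} (hn : n ∈ F i) (S : Set ι) :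
    n ∈ ⋃ k ∈ S, (↑(F k) : Set α) ↔ i ∈ S := by
  refine ⟨fun h => ?_, fun hi => Set.mem_biUnion hi hn⟩
  obtain ⟨k, hk, hnk⟩ := Set.mem_iUnion₂.1 h
  have hik : i = k := hF.eq (Finset.not_disjoint_iff.2 ⟨n, hn, hnk⟩)
  exact hik ▸ hk

theorem flipSeq_of_mem (Y : ℕ → Bool) {A : Set ℕ} {n : ℕ} (hn : n ∈ A) :
    flipSeq Y A n = !Y n :=
  if_pos hn

theorem flipSeq_of_notMem (Y : ℕ → Bool) {A : Set ℕ} {n : ℕ} (hn : n ∉ A) :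
    flipSeq Y A n = Y n :=
  if_neg hn

/-- The set of indices at which a binary string carries the bit `1`. As the default value of `getD`
is `0`, every such index is less than the length of the string. -/
def oneIndices (a : List Bool) : Set ℕ := {i | a.getD i false = true}

theorem lt_length_of_mem_oneIndices {a : List Bool} {i : ℕ} (hi : i ∈ oneIndices a) :
    i < a.length := by
  by_contra! hlen
  exact Bool.false_ne_true ((List.getD_eq_default a false hlen).symm.trans hi)

section Blocks

variable {Y : ℕ → Bool} {F : ℕ → Finset ℕ}

theorem flipSeq_biUnion_oneIndices_of_mem (hF : Pairwise (Function.onFun Disjoint F))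
    (hY : ∀ i, ∀ n ∈ F i, Y n = false) (a : List Bool) {i n : ℕ} (hn : n ∈ F i) :
    flipSeq Y (⋃ k ∈ oneIndices a, (↑(F k) : Set ℕ)) n = a.getD i false := by
  have hmem := mem_biUnion_coe_iff_of_mem hF hn (oneIndices a)
  by_cases hi : i ∈ oneIndices a
  · rw [flipSeq_of_mem Y (hmem.2 hi), hY i n hn, show a.getD i false = true from hi, Bool.not_false]
  · rw [flipSeq_of_notMem Y (mt hmem.1 hi), hY i n hn, Bool.eq_false_of_not_eq_true hi]

theorem instWord_eq_seqTake_flipSeq (hF : Pairwise (Function.onFun Disjoint F))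
    (hY : ∀ i, ∀ n ∈ F i, Y n = false) (a : List Bool) :
    instWord Y F a = seqTake (flipSeq Y (⋃ i ∈ oneIndices a, (↑(F i) : Set ℕ)))
      (sInf (↑(F a.length) : Set ℕ)) := by
  refine List.map_congr_left fun n _ => ?_
  split_ifs with hvar
  · exact (flipSeq_biUnion_oneIndices_of_mem hF hY a (Nat.find_spec hvar).2).symm
  · refine (flipSeq_of_notMem Y fun hn => hvar ?_).symm
    obtain ⟨i, hi, hni⟩ := Set.mem_iUnion₂.1 hn
    exact ⟨i, lt_length_of_mem_oneIndices hi, hni⟩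

end Blocks

theorem ovw_from_homogeneous_data_general {α : Type*} (c : List Bool → α) (Y : ℕ → Bool)
    (Pt : ℕ → Finset ℕ) (j : α) (hne : ∀ i, (Pt i).Nonempty)
    (hinc : ∀ i, FinLT (Pt i) (Pt (i + 1))) (hY : ∀ i, ∀ n ∈ Pt i, Y n = false)
    (hhom : ∀ J : Set ℕ, ∀ i, 1 ≤ i →
      c (seqTake (flipSeq Y (⋃ k ∈ J, (↑(Pt k) : Set ℕ))) (sInf (↑(Pt i) : Set ℕ))) = j) :
    ∃ (b : ℕ → Bool) (F : ℕ → Finset ℕ),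
      (∀ k, (F k).Nonempty) ∧ (∀ k, FinLT (F k) (F (k + 1))) ∧
      ∀ a : List Bool, c (instWord b F a) = j := by
  let F : ℕ → Finset ℕ := fun k => Pt (k + 1)
  have hFne : ∀ k, (F k).Nonempty := fun k => hne (k + 1)
  have hFinc : ∀ k, FinLT (F k) (F (k + 1)) := fun k => hinc (k + 1)
  have hFdisj := FinLT.pairwise_disjoint_of_forall_succ hFne hFinc
  refine ⟨Y, F, hFne, hFinc, fun a => ?_⟩
  rw [instWord_eq_seqTake_flipSeq hFdisj (fun k => hY (k + 1)) a]
  simpa only [Set.biUnion_image] using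
    hhom (Set.image (· + 1) (oneIndices a)) (a.length + 1) (Nat.le_add_left 1 _)

/-- From the homogeneous data `Y, (P̃_i), j` one obtains an infinite ordered variable word
whose instantiations all get color `j`. -/
theorem ovw_from_homogeneous_data (ℓ : ℕ) (hℓ : 1 ≤ ℓ) (c : List Bool → ℕ)
    (hc : ∀ σ, c σ < ℓ) (Y : ℕ → Bool) (Pt : ℕ → Finset ℕ) (j : ℕ)
    (hne : ∀ i, (Pt i).Nonempty) (hinc : ∀ i, FinLT (Pt i) (Pt (i + 1)))
    (hY : ∀ i, ∀ n ∈ Pt i, Y n = false) (hj : j < ℓ)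
    (hhom : ∀ J : Set ℕ, ∀ i, 1 ≤ i →
      c (seqTake (flipSeq Y (⋃ k ∈ J, (↑(Pt k) : Set ℕ))) (sInf (↑(Pt i) : Set ℕ))) = j) :
    ∃ (b : ℕ → Bool) (F : ℕ → Finset ℕ),
      (∀ k, (F k).Nonempty) ∧ (∀ k, FinLT (F k) (F (k + 1))) ∧
      ∀ a : List Bool, c (instWord b F a) = j :=
  ovw_from_homogeneous_data_general c Y Pt j hne hinc hY hhom
end
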